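/- Let f: ℝⁿ → ℝ be differentiable with ‖∇f(x)‖₂ ≤ L for all x. Then for independent standard Gaussian X ∼ N(0, Iₙ), Pr[|f(X) − E f(X)| ≥ t] ≤ 2·exp(−t²/(K·L²)) for a universal constant K > 0. -/

import Mathlib

/-!
Let `X`, `Y` be independent with the same centered Gaussian law. The law of `(X, Y)` is invariant
under the rotations `(X_θ, Y_θ)`, and `θ ↦ f X_θ` has derivative `f'(X_θ) Y_θ`. Averaging over
`θ ∈ [0, π / 2]` (Maurey and Pisier) gives, for every convex `Ψ ≥ 0`,
`E Ψ(f Y - f X) ≤ E Ψ((π / 2) f'(X) Y)`. Conditionally on `X`, the variable `f'(X) Y` is a real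
Gaussian whose variance is at most `V`, so exponential `Ψ` make `f X - f Y`, and by Jensen
`f X - E f X`, sub-Gaussian with parameter `(π / 2)² V`; the Chernoff bound concludes.
-/

open MeasureTheory ProbabilityTheory Real

-- Affine minorants of `Ψ` reduce Jensen's inequality to a one-sided fundamental theorem of calculus
-- that does not require `deriv φ` to be integrable.
lemma ofReal_convex_sub_le_lintegral_deriv {Ψ φ : ℝ → ℝ} (hΨ : ConvexOn ℝ Set.univ Ψ)
    (hΨ_nonneg : ∀ x, 0 ≤ Ψ x) (hφ : Differentiable ℝ φ) :
    ENNReal.ofReal (Ψ (φ 1 - φ 0)) ≤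
      ∫⁻ u in Set.Ioc (0 : ℝ) 1, ENNReal.ofReal (Ψ (deriv φ u)) := by
  have hΨ_cont : Continuous Ψ := continuousOn_univ.1 (hΨ.continuousOn isOpen_univ)
  have hΨ_deriv_nonneg : 0 ≤ᵐ[volume.restrict (Set.Ioc (0 : ℝ) 1)] fun u ↦ Ψ (deriv φ u) :=
    .of_forall fun u ↦ hΨ_nonneg _
  by_cases h_top : ∫⁻ u in Set.Ioc (0 : ℝ) 1, ENNReal.ofReal (Ψ (deriv φ u)) = ⊤
  · simp [h_top]
  have h_int : IntegrableOn (fun u ↦ Ψ (deriv φ u)) (Set.Ioc 0 1) :=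
    (lintegral_ofReal_ne_top_iff_integrable
      (hΨ_cont.measurable.comp (measurable_deriv φ)).aestronglyMeasurable hΨ_deriv_nonneg).1 h_top
  rw [← ofReal_integral_eq_lintegral_ofReal h_int hΨ_deriv_nonneg]
  refine ENNReal.ofReal_le_ofReal (le_of_forall_lt_imp_le_of_dense fun a ha ↦ ?_)
  obtain ⟨k, b, h_minorant, h_eq⟩ := hΨ.exists_affine_le_of_lt_real (Set.mem_univ _) ha
    isClosed_univ (hΨ_cont.lowerSemicontinuous.lowerSemicontinuousOn _)
  have h_int_sub : IntegrableOn (fun u ↦ Ψ (deriv φ u) - b) (Set.Icc 0 1) :=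
    ((integrableOn_Icc_iff_integrableOn_Ioc (by simp)).2 h_int).sub (integrable_const b)
  have h_ftc : k * φ 1 - k * φ 0 ≤ ∫ u in (0 : ℝ)..1, (Ψ (deriv φ u) - b) :=
    intervalIntegral.sub_le_integral_of_hasDeriv_right_of_le zero_le_one
      (hφ.continuous.const_mul k).continuousOn
      (fun u _ ↦ ((hφ u).hasDerivAt.const_mul k).hasDerivWithinAt) h_int_sub
      (fun u _ ↦ le_sub_iff_add_le.2 (h_minorant _ (Set.mem_univ _)))
  rw [intervalIntegral.integral_of_le zero_le_one, integral_sub h_int (integrable_const b)] at h_ftc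
  simp only [integral_const, measureReal_restrict_apply_univ, Real.volume_real_Ioc, sub_zero,
    zero_le_one, sup_of_le_left, one_smul] at h_ftc
  linarith

section SubgaussianMGF

variable {Ω : Type*} {mΩ : MeasurableSpace Ω} {μ : Measure Ω} {X : Ω → ℝ} {c : NNReal}

lemma hasSubgaussianMGF_of_lintegral_exp_le (hX : AEMeasurable X μ)
    (h : ∀ t : ℝ, ∫⁻ ω, ENNReal.ofReal (exp (t * X ω)) ∂μ ≤
      ENNReal.ofReal (exp (c * t ^ 2 / 2))) :
    HasSubgaussianMGF X c μ := by
  have h_int (t : ℝ) : Integrable (fun ω ↦ exp (t * X ω)) μ :=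
    (lintegral_ofReal_ne_top_iff_integrable (hX.const_mul t).exp.aestronglyMeasurable
      (.of_forall fun _ ↦ exp_nonneg _)).1 ((h t).trans_lt ENNReal.ofReal_lt_top).ne
  refine ⟨h_int, fun t ↦ (ENNReal.ofReal_le_ofReal_iff (exp_nonneg _)).1 ?_⟩
  rw [mgf, ofReal_integral_eq_lintegral_ofReal (h_int t) (.of_forall fun _ ↦ exp_nonneg _)]
  exact h t

lemma hasSubgaussianMGF_sub_integral_of_prod [IsProbabilityMeasure μ]
    (h : HasSubgaussianMGF (fun p : Ω × Ω ↦ X p.1 - X p.2) c (μ.prod μ)) :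
    HasSubgaussianMGF (fun ω ↦ X ω - μ[X]) c μ := by
  have h_exp (t a : ℝ) : Integrable (fun ω ↦ exp (t * (a - X ω))) μ := by
    obtain ⟨ω₀, hω₀⟩ := (h.integrable_exp_mul t).prod_right_ae.exists
    refine (hω₀.const_mul (exp (t * (a - X ω₀)))).congr (.of_forall fun ω ↦ ?_)
    simp only [← exp_add]
    ring_nf
  have h_exp_sub (t : ℝ) : Integrable (fun ω ↦ exp (t * (X ω - μ[X]))) μ := by
    simpa only [neg_mul_comm, neg_sub] using h_exp (-t) μ[X]
  have hX : Integrable X μ := by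
    have h_univ : integrableExpSet X μ = Set.univ :=
      Set.eq_univ_of_forall fun t ↦ by simpa [integrableExpSet] using h_exp (-t) 0
    exact integrable_of_mem_interior_integrableExpSet (by simp [h_univ])
  have h_jensen (t : ℝ) (ω : Ω) :
      exp (t * (X ω - μ[X])) ≤ ∫ ω', exp (t * (X ω - X ω')) ∂μ := by
    have h_mean : ∫ ω', t * (X ω - X ω') ∂μ = t * (X ω - μ[X]) := by
      rw [integral_const_mul, integral_sub (integrable_const _) hX]
      simp
    rw [← h_mean]
    exact convexOn_exp.map_integral_le continuous_exp.continuousOn isClosed_univ (by simp)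
      (((integrable_const _).sub hX).const_mul t) (h_exp t _)
  refine ⟨h_exp_sub, fun t ↦ ?_⟩
  calc mgf (fun ω ↦ X ω - μ[X]) μ t
      ≤ ∫ ω, ∫ ω', exp (t * (X ω - X ω')) ∂μ ∂μ :=
        integral_mono (h_exp_sub t) (h.integrable_exp_mul t).integral_prod_left (h_jensen t)
    _ = mgf (fun p : Ω × Ω ↦ X p.1 - X p.2) (μ.prod μ) t :=
        (integral_prod _ (h.integrable_exp_mul t)).symm
    _ ≤ exp (c * t ^ 2 / 2) := h.mgf_le t

lemma measureReal_le_abs_le_of_hasSubgaussianMGF [IsFiniteMeasure μ]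
    (h : HasSubgaussianMGF X c μ) {t : ℝ} (ht : 0 ≤ t) :
    μ.real {ω | t ≤ |X ω|} ≤ 2 * exp (-t ^ 2 / (2 * c)) := by
  calc μ.real {ω | t ≤ |X ω|}
      = μ.real ({ω | t ≤ X ω} ∪ {ω | t ≤ (-X) ω}) := by
        simp only [le_abs, Set.ofPred_or, Pi.neg_apply]
    _ ≤ μ.real {ω | t ≤ X ω} + μ.real {ω | t ≤ (-X) ω} := measureReal_union_le _ _
    _ ≤ 2 * exp (-t ^ 2 / (2 * c)) := by
        linarith [h.measure_ge_le ht, h.neg.measure_ge_le ht]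

end SubgaussianMGF

section Rotation

variable {E : Type*} [NormedAddCommGroup E] [NormedSpace ℝ E]

lemma hasDerivAt_rotation_fst (p : E × E) (θ : ℝ) :
    HasDerivAt (fun θ ↦ (ContinuousLinearMap.rotation θ p).1)
      (ContinuousLinearMap.rotation θ p).2 θ :=
  ((hasDerivAt_cos θ).smul_const p.1).add ((hasDerivAt_sin θ).smul_const p.2)

lemma hasDerivAt_comp_rotation_fst {F : Type*} [NormedAddCommGroup F] [NormedSpace ℝ F] {f : E → F}
    (hf : Differentiable ℝ f) (p : E × E) (θ : ℝ) :
    HasDerivAt (fun θ ↦ f (ContinuousLinearMap.rotation θ p).1)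
      (fderiv ℝ f (ContinuousLinearMap.rotation θ p).1 (ContinuousLinearMap.rotation θ p).2) θ :=
  (hf _).hasFDerivAt.comp_hasDerivAt θ (hasDerivAt_rotation_fst p θ)

lemma ofReal_convex_sub_le_lintegral_rotation {Ψ : ℝ → ℝ} {f : E → ℝ}
    (hΨ : ConvexOn ℝ Set.univ Ψ) (hΨ_nonneg : ∀ x, 0 ≤ Ψ x) (hf : Differentiable ℝ f)
    (p : E × E) :
    ENNReal.ofReal (Ψ (f p.2 - f p.1)) ≤
      ∫⁻ u in Set.Ioc (0 : ℝ) 1, ENNReal.ofReal (Ψ (π / 2 *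
        fderiv ℝ f (ContinuousLinearMap.rotation (π / 2 * u) p).1
          (ContinuousLinearMap.rotation (π / 2 * u) p).2)) := by
  set φ : ℝ → ℝ := fun θ ↦ f (ContinuousLinearMap.rotation θ p).1
  have hφ (θ : ℝ) : HasDerivAt φ (fderiv ℝ f (ContinuousLinearMap.rotation θ p).1
      (ContinuousLinearMap.rotation θ p).2) θ := hasDerivAt_comp_rotation_fst hf p θ
  have hφ_diff : Differentiable ℝ φ := fun θ ↦ (hφ θ).differentiableAt
  have h := ofReal_convex_sub_le_lintegral_deriv hΨ hΨ_nonneg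
    (hφ_diff.comp (differentiable_id.const_mul (π / 2)))
  simp only [Function.comp_def, id_eq, deriv_comp_mul_left, (hφ _).deriv, smul_eq_mul] at h
  simpa [φ, ContinuousLinearMap.rotation_apply] using h

variable [SecondCountableTopology E] [MeasurableSpace E] [BorelSpace E]

lemma measurable_fderiv_apply_snd {F : Type*} [NormedAddCommGroup F] [NormedSpace ℝ F]
    [CompleteSpace F] [MeasurableSpace F] [BorelSpace F] (f : E → F) :
    Measurable fun p : E × E ↦ fderiv ℝ f p.1 p.2 :=
  ContinuousLinearMap.measurable_apply₂.comp
    (((measurable_fderiv ℝ f).comp measurable_fst).prodMk measurable_snd)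

theorem lintegral_convex_sub_le_of_map_rotation_eq_self {P : Measure (E × E)} [SFinite P]
    (hP : ∀ θ, P.map (ContinuousLinearMap.rotation θ) = P) {Ψ : ℝ → ℝ} {f : E → ℝ}
    (hΨ : ConvexOn ℝ Set.univ Ψ) (hΨ_nonneg : ∀ x, 0 ≤ Ψ x) (hf : Differentiable ℝ f) :
    ∫⁻ p, ENNReal.ofReal (Ψ (f p.2 - f p.1)) ∂P ≤
      ∫⁻ p, ENNReal.ofReal (Ψ (π / 2 * fderiv ℝ f p.1 p.2)) ∂P := by
  set G : E × E → ENNReal := fun p ↦ ENNReal.ofReal (Ψ (π / 2 * fderiv ℝ f p.1 p.2))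
  have hG : Measurable G :=
    ((continuousOn_univ.1 (hΨ.continuousOn isOpen_univ)).measurable.comp
      ((measurable_fderiv_apply_snd f).const_mul (π / 2))).ennreal_ofReal
  have h_rotation : Continuous fun q : (E × E) × ℝ ↦
      ContinuousLinearMap.rotation (π / 2 * q.2) q.1 := by
    simp only [ContinuousLinearMap.rotation_apply]
    fun_prop
  calc ∫⁻ p, ENNReal.ofReal (Ψ (f p.2 - f p.1)) ∂P
      ≤ ∫⁻ p, (∫⁻ u in Set.Ioc (0 : ℝ) 1, G (ContinuousLinearMap.rotation (π / 2 * u) p)) ∂P :=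
        lintegral_mono (ofReal_convex_sub_le_lintegral_rotation hΨ hΨ_nonneg hf)
    _ = ∫⁻ u in Set.Ioc (0 : ℝ) 1, (∫⁻ p, G (ContinuousLinearMap.rotation (π / 2 * u) p) ∂P) :=
        lintegral_lintegral_swap (hG.comp h_rotation.measurable).aemeasurable
    _ = ∫⁻ _ in Set.Ioc (0 : ℝ) 1, (∫⁻ p, G p ∂P) := by
        refine lintegral_congr fun u ↦ ?_
        rw [← lintegral_map hG (ContinuousLinearMap.rotation (π / 2 * u)).continuous.measurable, hP]
    _ = ∫⁻ p, G p ∂P := by simp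

end Rotation

section Gaussian

lemma lintegral_exp_mul_strongDual {E : Type*} [TopologicalSpace E] [AddCommMonoid E] [Module ℝ E]
    [MeasurableSpace E] {μ : Measure E} [IsGaussian μ] (ℓ : StrongDual ℝ E) (a : ℝ) :
    ∫⁻ x, ENNReal.ofReal (exp (a * ℓ x)) ∂μ =
      ENNReal.ofReal (exp (μ[ℓ] * a + Var[ℓ; μ] * a ^ 2 / 2)) := by
  have h_mgf := mgf_gaussianReal (IsGaussian.map_eq_gaussianReal (μ := μ) ℓ) a
  rw [Real.coe_toNNReal _ (variance_nonneg _ _)] at h_mgf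
  have h_int : Integrable (fun x ↦ exp (a * ℓ x)) μ :=
    mgf_pos_iff.1 (h_mgf ▸ exp_pos _)
  rw [← ofReal_integral_eq_lintegral_ofReal h_int (.of_forall fun _ ↦ exp_nonneg _), ← h_mgf, mgf]

variable {E : Type*} [NormedAddCommGroup E] [NormedSpace ℝ E] [SecondCountableTopology E]
  [MeasurableSpace E] [BorelSpace E] {μ : Measure E} [IsGaussian μ] {f : E → ℝ} {V : ℝ}

lemma lintegral_prod_exp_mul_fderiv_le (hμ : ∀ ℓ : StrongDual ℝ E, μ[ℓ] = 0)
    (hV : ∀ x, Var[fderiv ℝ f x; μ] ≤ V) (a : ℝ) :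
    ∫⁻ p, ENNReal.ofReal (exp (a * fderiv ℝ f p.1 p.2)) ∂(μ.prod μ) ≤
      ENNReal.ofReal (exp (V * a ^ 2 / 2)) := by
  have h_meas : Measurable fun p : E × E ↦ ENNReal.ofReal (exp (a * fderiv ℝ f p.1 p.2)) :=
    ((measurable_fderiv_apply_snd f).const_mul a).exp.ennreal_ofReal
  rw [lintegral_prod _ h_meas.aemeasurable]
  calc ∫⁻ x, ∫⁻ y, ENNReal.ofReal (exp (a * fderiv ℝ f x y)) ∂μ ∂μ
      ≤ ∫⁻ _, ENNReal.ofReal (exp (V * a ^ 2 / 2)) ∂μ := by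
        refine lintegral_mono fun x ↦ ?_
        rw [lintegral_exp_mul_strongDual, hμ, zero_mul, zero_add]
        gcongr
        exact hV x
    _ = ENNReal.ofReal (exp (V * a ^ 2 / 2)) := by simp

variable [CompleteSpace E]

lemma hasSubgaussianMGF_prod_sub_of_variance_fderiv_le (hμ : ∀ ℓ : StrongDual ℝ E, μ[ℓ] = 0)
    (hf : Differentiable ℝ f) (hV : ∀ x, Var[fderiv ℝ f x; μ] ≤ V) :
    HasSubgaussianMGF (fun p : E × E ↦ f p.1 - f p.2) ((π / 2) ^ 2 * V).toNNReal (μ.prod μ) := by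
  have hV_nonneg : 0 ≤ V := (variance_nonneg _ _).trans (hV 0)
  have hf_cont := hf.continuous
  refine hasSubgaussianMGF_of_lintegral_exp_le (Continuous.aemeasurable (by fun_prop)) fun t ↦ ?_
  rw [Real.coe_toNNReal _ (by positivity)]
  have h_convex : ConvexOn ℝ Set.univ fun x ↦ exp (-t * x) :=
    convexOn_exp.comp_linearMap (LinearMap.mulLeft ℝ (-t))
  calc ∫⁻ p, ENNReal.ofReal (exp (t * (f p.1 - f p.2))) ∂(μ.prod μ)
      = ∫⁻ p, ENNReal.ofReal (exp (-t * (f p.2 - f p.1))) ∂(μ.prod μ) := by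
        simp only [neg_mul_comm, neg_sub]
    _ ≤ ∫⁻ p, ENNReal.ofReal (exp (-t * (π / 2 * fderiv ℝ f p.1 p.2))) ∂(μ.prod μ) :=
        lintegral_convex_sub_le_of_map_rotation_eq_self
          (IsGaussian.map_rotation_eq_self_of_forall_strongDual_eq_zero hμ) h_convex
          (fun _ ↦ exp_nonneg _) hf
    _ ≤ ENNReal.ofReal (exp (V * (-t * (π / 2)) ^ 2 / 2)) := by
        simpa only [mul_assoc] using lintegral_prod_exp_mul_fderiv_le hμ hV (-t * (π / 2))
    _ = ENNReal.ofReal (exp ((π / 2) ^ 2 * V * t ^ 2 / 2)) := by ring_nf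

theorem hasSubgaussianMGF_sub_integral_of_variance_fderiv_le (hf : Differentiable ℝ f)
    (hV : ∀ x, Var[fderiv ℝ f x; μ] ≤ V) :
    HasSubgaussianMGF (fun x ↦ f x - μ[f]) ((π / 2) ^ 2 * V).toNNReal μ := by
  have hf_cont := hf.continuous
  set m : E := ∫ x, x ∂μ
  set ν : Measure E := μ.map (· - m)
  have h_sub : Measurable (· - m) := measurable_sub_const m
  have hν_mean (ℓ : StrongDual ℝ E) : ν[ℓ] = 0 := by
    rw [integral_map h_sub.aemeasurable (by fun_prop)]
    simp only [map_sub]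
    rw [integral_sub (IsGaussian.integrable_dual μ ℓ) (integrable_const _)]
    simp [IsGaussian.integral_dual, m]
  have hν_var (x : E) : Var[fderiv ℝ (fun y ↦ f (y + m)) x; ν] ≤ V := by
    rw [fderiv_comp_add_right, variance_map (by fun_prop) h_sub.aemeasurable]
    simp only [Function.comp_def, map_sub]
    rw [variance_sub_const (by fun_prop)]
    exact hV _
  have h := (hasSubgaussianMGF_sub_integral_of_prod
    (hasSubgaussianMGF_prod_sub_of_variance_fderiv_le hν_mean
      (hf.comp (differentiable_id.add_const m)) hν_var)).of_map h_sub.aemeasurable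
  have h_mean : ν[fun y ↦ f (y + m)] = μ[f] := by
    rw [integral_map h_sub.aemeasurable (Continuous.aestronglyMeasurable (by fun_prop))]
    simp
  simpa [Function.comp_def, h_mean] using h

theorem gaussian_lipschitz_concentration_general (hf : Differentiable ℝ f)
    (hV : ∀ x, Var[fderiv ℝ f x; μ] ≤ V) {t : ℝ} (ht : 0 ≤ t) :
    μ {x | t ≤ |f x - μ[f]|} ≤ ENNReal.ofReal (2 * exp (-t ^ 2 / (π ^ 2 / 2 * V))) := by
  have hV_nonneg : 0 ≤ V := (variance_nonneg _ _).trans (hV 0)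
  rw [← ofReal_measureReal]
  refine ENNReal.ofReal_le_ofReal ((measureReal_le_abs_le_of_hasSubgaussianMGF
    (hasSubgaussianMGF_sub_integral_of_variance_fderiv_le hf hV) ht).trans_eq ?_)
  rw [Real.coe_toNNReal _ (by positivity)]
  ring_nf

end Gaussian

/-- Gaussian concentration for Lipschitz (gradient-bounded) functions: there is a
universal constant `K > 0` such that for any differentiable `f : ℝⁿ → ℝ` with
`‖∇f(x)‖₂ ≤ L` everywhere and `X ∼ N(0, Iₙ)`,
`Pr[|f(X) − E f(X)| ≥ t] ≤ 2·exp(−t²/(K·L²))`. -/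
theorem gaussian_lipschitz_concentration :
    ∃ K : ℝ, 0 < K ∧
      ∀ (n : ℕ) (f : EuclideanSpace ℝ (Fin n) → ℝ) (L t : ℝ),
        Differentiable ℝ f → (∀ x, ‖fderiv ℝ f x‖ ≤ L) → 0 ≤ t →
        (Measure.map (⇑(EuclideanSpace.equiv (Fin n) ℝ).symm)
            (Measure.pi fun _ : Fin n => gaussianReal 0 1))
          {x | t ≤ |f x - ∫ y, f y ∂(Measure.map (⇑(EuclideanSpace.equiv (Fin n) ℝ).symm)
              (Measure.pi fun _ : Fin n => gaussianReal 0 1))|}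
          ≤ ENNReal.ofReal (2 * Real.exp (-t ^ 2 / (K * L ^ 2))) := by
  refine ⟨π ^ 2 / 2, by positivity, fun n f L t hf hL ht ↦ ?_⟩
  have h_law : Measure.map (⇑(EuclideanSpace.equiv (Fin n) ℝ).symm)
      (Measure.pi fun _ : Fin n => gaussianReal 0 1) = stdGaussian (EuclideanSpace ℝ (Fin n)) :=
    map_pi_eq_stdGaussian
  rw [h_law]
  refine gaussian_lipschitz_concentration_general hf (fun x ↦ ?_) ht
  rw [variance_dual_stdGaussian]
  exact pow_le_pow_left₀ (norm_nonneg _) (hL x) 2
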